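/- (Constrained truncated tracial moment problem, real case) Let d ∈ ℕ, let f₁, …, f_r ∈ ℝ⟨X⟩_d, and let L : ℝ⟨X⟩_d → ℝ be a tracial linear functional satisfying L(1) = 1 and L(f₁) = … = L(f_r) = 0. Then L lies in the linear span of the set of functionals φ_A, where A ranges over all tuples A ∈ Mₙ(ℝ)^g (over all n ∈ ℕ) satisfying tr(f₁(A)) = … = tr(f_r(A)) = 0. -/

import Mathlib

/-- The subspace `F⟨X⟩_d` of the free algebra spanned by words of length at most `d`. -/
def wordSpan (F : Type*) [Field F] (g d : ℕ) : Submodule F (FreeAlgebra F (Fin g)) :=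
  Submodule.span F
    {x : FreeAlgebra F (Fin g) |
      ∃ w : List (Fin g), w.length ≤ d ∧ x = (w.map (FreeAlgebra.ι F)).prod}

lemma word_mem_wordSpan (F : Type*) [Field F] {g d : ℕ} (w : List (Fin g))
    (hw : w.length ≤ d) : (w.map (FreeAlgebra.ι F)).prod ∈ wordSpan F g d :=
  Submodule.subset_span ⟨w, hw, rfl⟩

lemma one_mem_wordSpan (F : Type*) [Field F] {g d : ℕ} :
    (1 : FreeAlgebra F (Fin g)) ∈ wordSpan F g d :=
  Submodule.subset_span ⟨[], by simp, by simp⟩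

/-- A linear functional on `F⟨X⟩_d` is tracial if `L (u * v) = L (v * u)` for all
words `u, v` with `|u| + |v| ≤ d`. -/
def IsTracial {F : Type*} [Field F] {g d : ℕ} (L : wordSpan F g d →ₗ[F] F) : Prop :=
  ∀ (u v : List (Fin g)) (h : u.length + v.length ≤ d),
    L ⟨((u ++ v).map (FreeAlgebra.ι F)).prod,
        word_mem_wordSpan F (u ++ v) (by rw [List.length_append]; exact h)⟩ =
    L ⟨((v ++ u).map (FreeAlgebra.ι F)).prod,
        word_mem_wordSpan F (v ++ u) (by rw [List.length_append]; omega)⟩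

/-!
A single tuple `A` suffices: `L = a φ_A` with `a ≠ 0`, so that `tr (fᵢ(A)) = 0` is equivalent to
`L fᵢ = 0`. Traces add up under direct sums of tuples. For a function `c` on cyclic words of length
`m`, consider words of length `m` with a marked position modulo `m`: reading a letter requires it to
be the first letter of the word, moves that letter to the end, and advances the mark. The mark rules
out closed walks of length less than `m`, and those of length `m` read a word `u` along its own
rotations, so with suitable weights the trace at `u` is `m * c u`. Such summands for
`m = 1, 2, …, d` correct the traces length by length. Their sizes do not depend on `L`, so the trace
of the identity is known beforehand and can be matched with `L 1` by rescaling.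
-/

open Matrix

section WordTrace

variable {σ ι κ R : Type*} [Fintype ι] [DecidableEq ι] [Fintype κ] [DecidableEq κ]

/-- The trace of the word `w` evaluated at the tuple of matrices `A`. -/
def wordTrace [Semiring R] (A : σ → Matrix ι ι R) (w : List σ) : R :=
  ((w.map A).prod).trace

/-- A function on words which is constant on cyclic words, that is, invariant under `uv ↦ vu`. -/
def IsCyclicallyInvariant (c : List σ → R) : Prop :=
  ∀ u v : List σ, c (u ++ v) = c (v ++ u)

theorem IsCyclicallyInvariant.apply_rotate {c : List σ → R} (hc : IsCyclicallyInvariant c)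
    (w : List σ) (n : ℕ) : c (w.rotate n) = c w := by
  rw [List.rotate_eq_drop_append_take_mod, hc, List.take_append_drop]

theorem IsCyclicallyInvariant.sub [Sub R] {c c' : List σ → R} (hc : IsCyclicallyInvariant c)
    (hc' : IsCyclicallyInvariant c') : IsCyclicallyInvariant (c - c') :=
  fun u v ↦ congrArg₂ (· - ·) (hc u v) (hc' u v)

theorem IsCyclicallyInvariant.const_smul {S : Type*} [SMul S R] {c : List σ → R}
    (hc : IsCyclicallyInvariant c) (a : S) : IsCyclicallyInvariant (a • c) :=
  fun u v ↦ congrArg (a • ·) (hc u v)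

theorem isCyclicallyInvariant_wordTrace [CommSemiring R] (A : σ → Matrix ι ι R) :
    IsCyclicallyInvariant (wordTrace A) := fun u v ↦ by
  simp only [wordTrace, List.map_append, List.prod_append]
  exact trace_mul_comm _ _

theorem wordTrace_nil [Semiring R] (A : σ → Matrix ι ι R) :
    wordTrace A [] = Fintype.card ι := by
  simp [wordTrace]

theorem wordTrace_zero [Semiring R] {w : List σ} (hw : w ≠ []) :
    wordTrace (0 : σ → Matrix ι ι R) w = 0 := by
  obtain ⟨i, w, rfl⟩ := List.exists_cons_of_ne_nil hw
  simp [wordTrace]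

theorem list_prod_map_fromBlocks [Semiring R] (A : σ → Matrix ι ι R) (B : σ → Matrix κ κ R)
    (w : List σ) : (w.map fun i ↦ fromBlocks (A i) 0 0 (B i)).prod =
      fromBlocks (w.map A).prod 0 0 (w.map B).prod := by
  induction w with
  | nil => simp
  | cons i w ih => simp [ih, fromBlocks_multiply]

theorem wordTrace_fromBlocks [Semiring R] (A : σ → Matrix ι ι R) (B : σ → Matrix κ κ R)
    (w : List σ) :
    wordTrace (fun i ↦ fromBlocks (A i) 0 0 (B i)) w = wordTrace A w + wordTrace B w := by
  simp [wordTrace, list_prod_map_fromBlocks, trace]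

theorem wordTrace_reindex [CommSemiring R] (e : ι ≃ κ) (A : σ → Matrix ι ι R) :
    wordTrace (fun i ↦ reindex e e (A i)) = wordTrace A := by
  funext w
  have hprod : (w.map fun i ↦ reindex e e (A i)).prod = reindexAlgEquiv R R e (w.map A).prod := by
    rw [map_list_prod, List.map_map]
    rfl
  rw [wordTrace, hprod]
  exact e.symm.sum_comp fun i ↦ (w.map A).prod i i

end WordTrace

section TransitionMatrix

variable {S σ R : Type*} [DecidableEq S] [CommSemiring R]

/-- The weighted adjacency matrices of a deterministic automaton: reading the letter `i` in the
state `s` moves to the state `step s`, whatever `i` is, with weight `γ s i`. -/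
def transitionMatrix (step : S → S) (γ : S → σ → R) (i : σ) : Matrix S S R :=
  of fun s t ↦ if t = step s then γ s i else 0

theorem transitionMatrix_apply (step : S → S) (γ : S → σ → R) (i : σ) (s t : S) :
    transitionMatrix step γ i s t = if t = step s then γ s i else 0 :=
  rfl

variable [Fintype S]

theorem list_prod_map_transitionMatrix (step : S → S) (γ : S → σ → R) {n : ℕ} (v : Fin n → σ)
    (s t : S) : ((List.ofFn v).map (transitionMatrix step γ)).prod s t =
      if t = step^[n] s then ∏ j : Fin n, γ (step^[j] s) (v j) else 0 := by
  induction n generalizing s with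
  | zero => simp [one_apply, eq_comm]
  | succ n ih =>
    rw [List.ofFn_succ, List.map_cons, List.prod_cons, mul_apply]
    simp only [ih, transitionMatrix_apply, ite_mul, zero_mul, Finset.sum_ite_eq', Finset.mem_univ,
      if_true]
    simp [Fin.prod_univ_succ]

theorem wordTrace_transitionMatrix (step : S → S) (γ : S → σ → R) {n : ℕ} (v : Fin n → σ) :
    wordTrace (transitionMatrix step γ) (List.ofFn v) =
      ∑ s, if step^[n] s = s then ∏ j : Fin n, γ (step^[j] s) (v j) else 0 := by
  simp only [wordTrace, trace, diag_apply, list_prod_map_transitionMatrix, eq_comm]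

end TransitionMatrix

section CycleMatrix

open scoped Fin.NatCast Fin.CommRing

variable {σ R : Type*} {m : ℕ} [NeZero m]

theorem list_ofFn_add_natCast (w : Fin m → σ) (n : ℕ) :
    List.ofFn (fun j ↦ w (j + (n : Fin m))) = (List.ofFn w).rotate n := by
  apply List.ext_getElem
  · simp
  · intro i _ _
    simp only [List.getElem_rotate, List.getElem_ofFn]
    congr 1
    simp [Fin.ext_iff, Fin.val_add]

/-- The step `(a, w) ↦ (a + 1, w')` on words of length `m` with a marked position, where `w'` is
`w` with its first letter moved to the end. -/
def rotateStep (s : Fin m × (Fin m → σ)) : Fin m × (Fin m → σ) :=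
  (s.1 + 1, fun j ↦ s.2 (j + 1))

theorem rotateStep_iterate (n : ℕ) (s : Fin m × (Fin m → σ)) :
    rotateStep^[n] s = (s.1 + n, fun j ↦ s.2 (j + n)) := by
  induction n with
  | zero => simp
  | succ n ih =>
    simp [Function.iterate_succ_apply', ih, rotateStep, add_assoc, add_comm (1 : Fin m)]

variable [DecidableEq σ] [CommSemiring R]

/-- The weight of reading the letter `i` in a state of `rotateStep`: `i` has to be the first letter
of the current word, and `c` is collected only at position `0`, hence once during a full turn. -/
def cycleWeight (c : List σ → R) (s : Fin m × (Fin m → σ)) (i : σ) : R :=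
  if s.2 0 = i then if s.1 = 0 then c (List.ofFn s.2) else 1 else 0

/-- From `s = (a, v)`, `c` is collected at the one step `j = -a` at which the marked position is
`0`; the current word there is a rotation of `v`. -/
theorem prod_cycleWeight_rotateStep_iterate {c : List σ → R} (hc : IsCyclicallyInvariant c)
    (v : Fin m → σ) (s : Fin m × (Fin m → σ)) :
    ∏ j : Fin m, cycleWeight c (rotateStep^[j] s) (v j) =
      if s.2 = v then c (List.ofFn v) else 0 := by
  obtain ⟨a, w⟩ := s
  have hfactor (j : Fin m) : cycleWeight c (rotateStep^[j] (a, w)) (v j) =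
      if w j = v j then if j = -a then c (List.ofFn w) else 1 else 0 := by
    have hrot : c (List.ofFn fun i ↦ w (i + j)) = c (List.ofFn w) := by
      rw [← hc.apply_rotate (List.ofFn w) j, ← list_ofFn_add_natCast, Fin.cast_val_eq_self]
    simp [cycleWeight, rotateStep_iterate, hrot, eq_neg_iff_add_eq_zero, add_comm a]
  simp only [hfactor, Fintype.prod_ite_zero, ← funext_iff, Fintype.prod_ite_eq']
  split_ifs with hwv
  · rw [hwv]
  · rfl

/-- Matrices whose traces, for cyclically invariant `c`, are `m * c u` at the words `u` of length
`m` and vanish at shorter nonempty words. -/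
def cycleMatrix (m : ℕ) [NeZero m] (c : List σ → R) :
    σ → Matrix (Fin m × (Fin m → σ)) (Fin m × (Fin m → σ)) R :=
  transitionMatrix rotateStep (cycleWeight c)

variable [Fintype σ]

theorem wordTrace_cycleMatrix_of_length_lt (c : List σ → R) {u : List σ} (hu : u ≠ [])
    (hum : u.length < m) : wordTrace (cycleMatrix m c) u = 0 := by
  cases u using List.ofFnRec with | _ n v
  rw [List.length_ofFn] at hum
  have hn : n ≠ 0 := by simpa using hu
  have hndvd : ¬ m ∣ n := Nat.not_dvd_of_pos_of_lt (Nat.pos_of_ne_zero hn) hum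
  rw [cycleMatrix, wordTrace_transitionMatrix]
  refine Finset.sum_eq_zero fun s _ ↦ if_neg fun h ↦ hndvd ?_
  simpa [rotateStep_iterate] using congrArg Prod.fst h

theorem wordTrace_cycleMatrix_of_length_eq {c : List σ → R} (hc : IsCyclicallyInvariant c)
    {u : List σ} (hum : u.length = m) : wordTrace (cycleMatrix m c) u = m * c u := by
  cases u using List.ofFnRec with | _ n v
  obtain rfl : n = m := by simpa using hum
  have hloop (s : Fin n × (Fin n → σ)) : rotateStep^[n] s = s := by simp [rotateStep_iterate]
  rw [cycleMatrix, wordTrace_transitionMatrix]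
  simp [hloop, prod_cycleWeight_rotateStep_iterate hc, Fintype.sum_prod_type]

end CycleMatrix

section Realization

/-- Every cyclically invariant function on words is, on the nonempty words of length at most `d`,
the function `wordTrace A` of some tuple `A` of `n × n` matrices, with `n` independent of the
function. The empty word is left out because its trace is always `n`. -/
def IsRealizationSize (F σ : Type*) [Field F] (d n : ℕ) : Prop :=
  ∀ c : List σ → F, IsCyclicallyInvariant c →
    ∃ A : σ → Matrix (Fin n) (Fin n) F, ∀ w : List σ, w ≠ [] → w.length ≤ d → wordTrace A w = c w

variable {F σ : Type*} [Field F]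

theorem isRealizationSize_zero (n : ℕ) : IsRealizationSize F σ 0 n :=
  fun _ _ ↦ ⟨0, fun _ hw hlen ↦ absurd (List.length_eq_zero_iff.mp (Nat.le_zero.mp hlen)) hw⟩

theorem isRealizationSize_card {d : ℕ} (ι : Type*) [Fintype ι] [DecidableEq ι]
    (h : ∀ c : List σ → F, IsCyclicallyInvariant c →
      ∃ A : σ → Matrix ι ι F, ∀ w : List σ, w ≠ [] → w.length ≤ d → wordTrace A w = c w) :
    IsRealizationSize F σ d (Fintype.card ι) := fun c hc ↦ by
  obtain ⟨A, hA⟩ := h c hc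
  refine ⟨fun i ↦ reindex (Fintype.equivFin ι) (Fintype.equivFin ι) (A i), ?_⟩
  simpa only [wordTrace_reindex] using hA

theorem IsRealizationSize.succ {d n : ℕ} (h : IsRealizationSize F σ d n) :
    IsRealizationSize F σ d (n + 1) := by
  suffices IsRealizationSize F σ d (Fintype.card (Fin n ⊕ Fin 1)) by simpa using this
  refine isRealizationSize_card (Fin n ⊕ Fin 1) fun c hc ↦ ?_
  obtain ⟨A, hA⟩ := h c hc
  refine ⟨fun i ↦ fromBlocks (A i) 0 0 ((0 : σ → Matrix (Fin 1) (Fin 1) F) i), fun w hw hlen ↦ ?_⟩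
  rw [wordTrace_fromBlocks, wordTrace_zero hw, add_zero, hA w hw hlen]

theorem IsRealizationSize.exists_length_succ [Finite σ] {d n : ℕ} (h : IsRealizationSize F σ d n)
    (hd : ((d + 1 : ℕ) : F) ≠ 0) : ∃ n', IsRealizationSize F σ (d + 1) n' := by
  classical
  cases nonempty_fintype σ
  refine ⟨_, isRealizationSize_card (Fin n ⊕ Fin (d + 1) × (Fin (d + 1) → σ)) fun c hc ↦ ?_⟩
  obtain ⟨A, hA⟩ := h c hc
  let c' : List σ → F := ((d + 1 : ℕ) : F)⁻¹ • (c - wordTrace A)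
  have hc' : IsCyclicallyInvariant c' :=
    (hc.sub (isCyclicallyInvariant_wordTrace A)).const_smul _
  refine ⟨fun i ↦ fromBlocks (A i) 0 0 (cycleMatrix (d + 1) c' i), fun w hw hlen ↦ ?_⟩
  rw [wordTrace_fromBlocks]
  rcases hlen.lt_or_eq with hlt | heq
  · rw [wordTrace_cycleMatrix_of_length_lt c' hw hlt, add_zero, hA w hw (Nat.lt_succ_iff.mp hlt)]
  · simp only [wordTrace_cycleMatrix_of_length_eq hc' heq, c', Pi.smul_apply, Pi.sub_apply,
      smul_eq_mul, mul_inv_cancel_left₀ hd, add_sub_cancel]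

theorem exists_isRealizationSize [Finite σ] {d : ℕ} (hd : (d.factorial : F) ≠ 0) :
    ∃ n, IsRealizationSize F σ d n := by
  induction d with
  | zero => exact ⟨0, isRealizationSize_zero 0⟩
  | succ d ih =>
    rw [Nat.factorial_succ, Nat.cast_mul, mul_ne_zero_iff] at hd
    obtain ⟨n, hn⟩ := ih hd.2
    exact hn.exists_length_succ hd.1

theorem exists_isRealizationSize_cast_ne_zero [Finite σ] {d : ℕ} (hd : (d.factorial : F) ≠ 0) :
    ∃ n : ℕ, (n : F) ≠ 0 ∧ IsRealizationSize F σ d n := by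
  obtain ⟨n, hn⟩ := exists_isRealizationSize (σ := σ) hd
  by_cases h0 : (n : F) = 0
  · exact ⟨n + 1, by simp [h0], hn.succ⟩
  · exact ⟨n, h0, hn⟩

end Realization

section TracialFunctional

variable {F : Type*} [Field F] {g d : ℕ}

theorem wordSpan_linearMap_ext {M : Type*} [AddCommMonoid M] [Module F M]
    {L L' : wordSpan F g d →ₗ[F] M}
    (h : ∀ (w : List (Fin g)) (hw : w.length ≤ d),
      L ⟨_, word_mem_wordSpan F w hw⟩ = L' ⟨_, word_mem_wordSpan F w hw⟩) : L = L' := by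
  refine LinearMap.ext_on Submodule.span_span_coe_preimage ?_
  rintro ⟨_, _⟩ ⟨w, hw, rfl⟩
  exact h w hw

/-- The functional `φ_A : p ↦ tr (p(A))` on `F⟨X⟩_d`. -/
def traceFunctional {n : ℕ} (A : Fin g → Matrix (Fin n) (Fin n) F) : wordSpan F g d →ₗ[F] F :=
  traceLinearMap (Fin n) F F ∘ₗ (FreeAlgebra.lift F A).toLinearMap ∘ₗ (wordSpan F g d).subtype

theorem traceFunctional_word {n : ℕ} (A : Fin g → Matrix (Fin n) (Fin n) F) {w : List (Fin g)}
    (hw : w.length ≤ d) :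
    traceFunctional A ⟨_, word_mem_wordSpan F w hw⟩ = wordTrace A w := by
  simp [traceFunctional, wordTrace, map_list_prod, Function.comp_def]

/-- The values of `L` at words, extended by zero to the words of length greater than `d`. -/
def wordMoment (L : wordSpan F g d →ₗ[F] F) (w : List (Fin g)) : F :=
  if hw : w.length ≤ d then L ⟨_, word_mem_wordSpan F w hw⟩ else 0

theorem IsTracial.isCyclicallyInvariant_wordMoment {L : wordSpan F g d →ₗ[F] F}
    (hL : IsTracial L) : IsCyclicallyInvariant (wordMoment L) := fun u v ↦ by
  by_cases h : u.length + v.length ≤ d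
  · have h' : v.length + u.length ≤ d := by rwa [add_comm]
    simpa [wordMoment, h, h'] using hL u v h
  · have h' : ¬ v.length + u.length ≤ d := by rwa [add_comm]
    simp [wordMoment, h, h']

theorem IsTracial.exists_eq_smul_traceFunctional {L : wordSpan F g d →ₗ[F] F}
    (hd : (d.factorial : F) ≠ 0) (hL : IsTracial L) (hone : L ⟨1, one_mem_wordSpan F⟩ ≠ 0) :
    ∃ a : F, a ≠ 0 ∧ ∃ (n : ℕ) (A : Fin g → Matrix (Fin n) (Fin n) F),
      L = a • traceFunctional A := by
  obtain ⟨n, hn, hreal⟩ := exists_isRealizationSize_cast_ne_zero (σ := Fin g) hd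
  set a : F := L ⟨1, one_mem_wordSpan F⟩ / n with ha
  have ha0 : a ≠ 0 := div_ne_zero hone hn
  obtain ⟨A, hA⟩ := hreal (a⁻¹ • wordMoment L) (hL.isCyclicallyInvariant_wordMoment.const_smul _)
  refine ⟨a, ha0, n, A, wordSpan_linearMap_ext fun w hw ↦ ?_⟩
  rw [LinearMap.smul_apply, traceFunctional_word A hw, smul_eq_mul]
  rcases eq_or_ne w [] with rfl | hne
  · rw [wordTrace_nil, Fintype.card_fin, ha, div_mul_cancel₀ _ hn]
    rfl
  · rw [hA w hne hw, Pi.smul_apply, smul_eq_mul, mul_inv_cancel_left₀ ha0, wordMoment, dif_pos hw]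

theorem constrained_tracial_moment_problem_real_general {κ : Sort*} (f : κ → wordSpan F g d)
    (L : wordSpan F g d →ₗ[F] F) (hd : (d.factorial : F) ≠ 0) (hL : IsTracial L)
    (hone : L ⟨1, one_mem_wordSpan F⟩ ≠ 0) (hf : ∀ i, L (f i) = 0) :
    ∃ (a : F) (n : ℕ) (A : Fin g → Matrix (Fin n) (Fin n) F),
      (∀ i, trace (FreeAlgebra.lift F A (f i : FreeAlgebra F (Fin g))) = 0) ∧
      ∀ p : wordSpan F g d,
        L p = a * trace (FreeAlgebra.lift F A (p : FreeAlgebra F (Fin g))) := by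
  obtain ⟨a, ha, n, A, rfl⟩ := hL.exists_eq_smul_traceFunctional hd hone
  exact ⟨a, n, A, fun i ↦ (mul_eq_zero_iff_left ha).mp (hf i), fun _ ↦ rfl⟩

end TracialFunctional

/-- **Constrained truncated tracial moment problem, real case.** A tracial linear
functional `L` on `ℝ⟨X⟩_d` with `L 1 = 1` vanishing on `f₁, …, f_r` is a linear
combination of trace-evaluation functionals `p ↦ tr (p A)` at tuples `A` of real
matrices satisfying `tr (f₁ A) = ⋯ = tr (f_r A) = 0`. -/
theorem constrained_tracial_moment_problem_real (g d r : ℕ)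
    (f : Fin r → wordSpan ℝ g d)
    (L : wordSpan ℝ g d →ₗ[ℝ] ℝ) (hL : IsTracial L)
    (hone : L ⟨1, one_mem_wordSpan ℝ⟩ = 1)
    (hf : ∀ i : Fin r, L (f i) = 0) :
    ∃ (k : ℕ) (lam : Fin k → ℝ) (sz : Fin k → ℕ)
      (A : (ℓ : Fin k) → Fin g → Matrix (Fin (sz ℓ)) (Fin (sz ℓ)) ℝ),
      (∀ (ℓ : Fin k) (i : Fin r),
        Matrix.trace (FreeAlgebra.lift ℝ (A ℓ) ((f i : wordSpan ℝ g d) : FreeAlgebra ℝ (Fin g))) = 0) ∧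
      ∀ p : wordSpan ℝ g d,
        L p = ∑ ℓ : Fin k,
          lam ℓ * Matrix.trace (FreeAlgebra.lift ℝ (A ℓ) (p : FreeAlgebra ℝ (Fin g))) := by
  obtain ⟨a, n, A, hA, hL⟩ := constrained_tracial_moment_problem_real_general f L
    (mod_cast d.factorial_ne_zero) hL (hone ▸ one_ne_zero) hf
  exact ⟨1, fun _ ↦ a, fun _ ↦ n, fun _ ↦ A, fun _ ↦ hA, by simpa using hL⟩
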